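/- Let ũ₁ ∈ ℝ^M and ṽ₁ ∈ ℝ^N be unit vectors, and let P̃₁ ∈ ℝ^{M×(M−1)} and Q̃₁ ∈ ℝ^{N×(N−1)} be such that [ũ₁, P̃₁] ∈ ℝ^{M×M} and [ṽ₁, Q̃₁] ∈ ℝ^{N×N} are orthogonal matrices. Define B̃₁' = [[−τ I_{M−1}, P̃₁ᵀ A Q̃₁], [Q̃₁ᵀ Aᵀ P̃₁, −τ I_{N−1}]] and B₁' = [[−τ I_{M−1}, Σ₁'], [Σ₁'ᵀ, −τ I_{N−1}]], where Σ₁' ∈ ℝ^{(M−1)×(N−1)} is rectangular diagonal with diagonal entries σ₂, …, σ_N, and set sin φ = ‖P̃₁ᵀ u₁‖ and sin ψ = ‖Q̃₁ᵀ v₁‖. Then there exists an orthogonal matrix Z ∈ ℝ^{(M+N−2)×(M+N−2)} such that ‖B̃₁' − Zᵀ B₁' Z‖ ≤ ‖A‖ · (sin φ + sin ψ)². -/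

import Mathlib

open Matrix

noncomputable def vnorm {ι : Type*} [Fintype ι] (x : ι → ℝ) : ℝ :=
  Real.sqrt (∑ i, x i ^ 2)

noncomputable def specNorm {ι κ : Type*} [Fintype ι] [Fintype κ] [DecidableEq κ]
    (A : Matrix ι κ ℝ) : ℝ :=
  ‖LinearMap.toContinuousLinearMap (Matrix.toEuclideanLin A)‖

/-!
In the bases `[u, P]` and `[v, Q]` the matrix `A` is `diag(s, S)`. The change of basis
`[u, P]ᴴ[u', P']` is unitary, and its off-diagonal row `uᴴP'` has norm `sin φ`. Although its
principal block `PᴴP'` is not unitary, it lies within `sin² φ` of a unitary `X`; likewise `QᴴQ'`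
lies within `sin² ψ` of a unitary `Y`. Conjugating by `Z = diag(X, Y)` therefore leaves an error of
at most `‖A‖ (sin φ sin ψ + sin² φ + sin² ψ)`, where the product comes from the entry `s` and the
two squares from replacing `PᴴP'` and `QᴴQ'` by `X` and `Y`.
-/

open WithLp
open scoped Matrix.Norms.L2Operator

theorem conjTranspose_submatrix_one_mul_self {α m k : Type*} [Semiring α] [StarRing α] [Fintype m]
    [DecidableEq m] [DecidableEq k] {f : k → m} (hf : f.Injective) :
    ((1 : Matrix m m α).submatrix id f)ᴴ * (1 : Matrix m m α).submatrix id f = 1 := by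
  rw [conjTranspose_submatrix, conjTranspose_one, ← submatrix_mul _ _ _ _ _ Function.bijective_id,
    Matrix.one_mul, submatrix_one _ hf]

section OperatorNorm

variable {𝕜 m n k l : Type*} [RCLike 𝕜] [Fintype m] [Fintype n] [Fintype k] [Fintype l]
  [DecidableEq n] [DecidableEq l]

theorem l2_opNorm_le_one_of_conjTranspose_mul_self_eq_one {A : Matrix m n 𝕜} (hA : Aᴴ * A = 1) :
    ‖A‖ ≤ 1 := by
  have h_one : ‖(1 : Matrix n n 𝕜)‖ ≤ 1 := by
    rw [← diagonal_one, l2_opNorm_diagonal]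
    exact (pi_norm_le_iff_of_nonneg zero_le_one).2 fun _ => norm_one.le
  rw [← hA, l2_opNorm_conjTranspose_mul_self, ← sq] at h_one
  exact (sq_le_one_iff₀ (norm_nonneg A)).1 h_one

theorem l2_opNorm_mul_mul_le [DecidableEq k] (A : Matrix m n 𝕜) (B : Matrix n k 𝕜)
    (C : Matrix k l 𝕜) : ‖A * B * C‖ ≤ ‖A‖ * ‖B‖ * ‖C‖ :=
  (l2_opNorm_mul _ _).trans (by gcongr; exact l2_opNorm_mul _ _)

theorem l2_opNorm_conjTranspose_mul_mul_le [DecidableEq k] {U : Matrix m k 𝕜} {V : Matrix n l 𝕜}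
    (hU : Uᴴ * U = 1) (hV : Vᴴ * V = 1) (A : Matrix m n 𝕜) : ‖Uᴴ * A * V‖ ≤ ‖A‖ := by
  classical
  calc ‖Uᴴ * A * V‖ ≤ ‖U‖ * ‖A‖ * ‖V‖ := by
        simpa only [l2_opNorm_conjTranspose] using l2_opNorm_mul_mul_le Uᴴ A V
    _ ≤ 1 * ‖A‖ * 1 := by
        gcongr
        exacts [l2_opNorm_le_one_of_conjTranspose_mul_self_eq_one hU,
          l2_opNorm_le_one_of_conjTranspose_mul_self_eq_one hV]
    _ = ‖A‖ := by ring

theorem l2_opNorm_submatrix_le {f : k → m} {g : l → n} (hf : f.Injective)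
    (hg : g.Injective) (A : Matrix m n 𝕜) : ‖A.submatrix f g‖ ≤ ‖A‖ := by
  classical
  convert l2_opNorm_conjTranspose_mul_mul_le (conjTranspose_submatrix_one_mul_self hf)
    (conjTranspose_submatrix_one_mul_self hg) A
  ext i j
  simp [Matrix.mul_apply, Matrix.one_apply]

theorem l2_opNorm_fromBlocks_antidiagonal_le [DecidableEq m] (B : Matrix m n 𝕜)
    (C : Matrix n m 𝕜) : ‖fromBlocks 0 B C 0‖ ≤ max ‖B‖ ‖C‖ := by
  rw [l2_opNorm_def]
  refine ContinuousLinearMap.opNorm_le_bound _ (by positivity) fun x => ?_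
  refine (sq_le_sq₀ (by positivity) (by positivity)).mp ?_
  have upper := pow_le_pow_left₀ (norm_nonneg _) (l2_opNorm_mulVec B (toLp 2 fun i => x (.inr i))) 2
  have lower := pow_le_pow_left₀ (norm_nonneg _) (l2_opNorm_mulVec C (toLp 2 fun i => x (.inl i))) 2
  rw [mul_pow] at upper lower ⊢
  simp only [PiLp.continuousLinearEquiv_symm_apply, EuclideanSpace.norm_sq_eq,
    LinearEquiv.trans_apply, LinearMap.coe_toContinuousLinearMap', ofLp_toLpLin, toLin'_apply,
    fromBlocks_mulVec, zero_mulVec, zero_add, add_zero, Fintype.sum_sum_type, Sum.elim_inl,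
    Sum.elim_inr] at upper lower ⊢
  calc _ ≤ ‖B‖ ^ 2 * ∑ j, ‖x (.inr j)‖ ^ 2 + ‖C‖ ^ 2 * ∑ i, ‖x (.inl i)‖ ^ 2 :=
        add_le_add upper lower
    _ ≤ max ‖B‖ ‖C‖ ^ 2 * ∑ j, ‖x (.inr j)‖ ^ 2 + max ‖B‖ ‖C‖ ^ 2 * ∑ i, ‖x (.inl i)‖ ^ 2 := by
        gcongr
        exacts [le_max_left _ _, le_max_right _ _]
    _ = _ := by ring

theorem l2_opNorm_replicateCol (x : m → 𝕜) : ‖replicateCol Unit x‖ = ‖toLp 2 x‖ := by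
  have gram : (replicateCol Unit x)ᴴ * replicateCol Unit x
      = diagonal fun _ => ((‖toLp 2 x‖ ^ 2 : ℝ) : 𝕜) := by
    ext
    simp [Matrix.mul_apply, EuclideanSpace.norm_sq_eq, RCLike.conj_mul]
  rw [← mul_self_inj (norm_nonneg _) (norm_nonneg _), ← l2_opNorm_conjTranspose_mul_self, gram,
    l2_opNorm_diagonal, pi_norm_const]
  simp [sq]

theorem l2_opNorm_conjTranspose_replicateCol_mul [DecidableEq k] (u : m → 𝕜) (P : Matrix m k 𝕜) :
    ‖(replicateCol Unit u)ᴴ * P‖ = ‖toLp 2 (Pᴴ *ᵥ u)‖ := by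
  rw [← l2_opNorm_replicateCol, replicateCol_mulVec, ← l2_opNorm_conjTranspose, conjTranspose_mul,
    conjTranspose_conjTranspose]

end OperatorNorm

section PrincipalBlock

variable {𝕜 α ι k l : Type*} [RCLike 𝕜] [CommRing α] [StarRing α] [Fintype ι] [Fintype k]
  [Fintype l] [DecidableEq ι] [DecidableEq k] [DecidableEq l]

/- Feeding the output `ω * R` of the first block back as its input `R` leaves the isometry
`y ↦ (D + C * R) y`, because `W` preserves the norm of the full vector. -/
theorem add_mul_mem_unitaryGroup_of_fromBlocks {A : Matrix ι ι α} {B : Matrix ι k α}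
    {C : Matrix k ι α} {D : Matrix k k α} (hW : fromBlocks A B C D ∈ unitaryGroup (ι ⊕ k) α)
    {ω : Matrix ι ι α} (hω : ω ∈ unitaryGroup ι α) {R : Matrix ι k α} (hR : A * R + B = ω * R) :
    D + C * R ∈ unitaryGroup k α := by
  set W := fromBlocks A B C D
  set Z := D + C * R with hZ
  set V : Matrix (ι ⊕ k) k α := fromRows R 1 with hV
  have hWV : W * V = fromRows (ω * R) Z := by
    rw [fromBlocks_mul_fromRows, Matrix.mul_one, Matrix.mul_one, hR, hZ, add_comm D]
  have gram : Rᴴ * R + 1 = Rᴴ * R + Zᴴ * Z :=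
    calc Rᴴ * R + 1 = Vᴴ * V := by
          simp [hV, conjTranspose_fromRows_eq_fromCols_conjTranspose, fromCols_mul_fromRows]
      _ = Vᴴ * (star W * W) * V := by rw [mem_unitaryGroup_iff'.1 hW, Matrix.mul_one]
      _ = (W * V)ᴴ * (W * V) := by
          simp only [star_eq_conjTranspose, conjTranspose_mul, Matrix.mul_assoc]
      _ = Rᴴ * (star ω * ω) * R + Zᴴ * Z := by
          simp only [hWV, conjTranspose_fromRows_eq_fromCols_conjTranspose, fromCols_mul_fromRows,
            star_eq_conjTranspose, conjTranspose_mul, Matrix.mul_assoc]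
      _ = Rᴴ * R + Zᴴ * Z := by rw [mem_unitaryGroup_iff'.1 hω, Matrix.mul_one]
  exact mem_unitaryGroup_iff'.2 (add_left_cancel gram).symm

theorem norm_col_eq_norm_row_of_fromBlocks_mem_unitaryGroup {c : Matrix Unit Unit 𝕜}
    {b : Matrix Unit k 𝕜} {p : Matrix k Unit 𝕜} {C : Matrix k k 𝕜}
    (hW : fromBlocks c b p C ∈ unitaryGroup (Unit ⊕ k) 𝕜) : ‖p‖ = ‖b‖ := by
  have hcol := mem_unitaryGroup_iff'.1 hW
  have hrow := mem_unitaryGroup_iff.1 hW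
  rw [star_eq_conjTranspose, fromBlocks_conjTranspose, fromBlocks_multiply, ← fromBlocks_one,
    fromBlocks_inj] at hcol hrow
  have hcomm : cᴴ * c = c * cᴴ := by
    ext
    simp [Matrix.mul_apply, mul_comm]
  have hgram : pᴴ * p = bᴴᴴ * bᴴ := by
    rw [conjTranspose_conjTranspose, eq_sub_of_add_eq' hcol.1, eq_sub_of_add_eq' hrow.1, hcomm]
  rw [← l2_opNorm_conjTranspose b, ← mul_self_inj (norm_nonneg _) (norm_nonneg _),
    ← l2_opNorm_conjTranspose_mul_self, ← l2_opNorm_conjTranspose_mul_self, hgram]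

theorem exists_star_mul_self_eq_one_and_one_le_norm_sub (c : 𝕜) :
    ∃ ω : 𝕜, star ω * ω = 1 ∧ 1 ≤ ‖ω - c‖ := by
  have two_le : 2 ≤ ‖1 - c‖ + ‖-1 - c‖ :=
    calc (2 : ℝ) = ‖(1 - c) - (-1 - c)‖ := by
          rw [sub_sub_sub_cancel_right, sub_neg_eq_add, one_add_one_eq_two, RCLike.norm_two]
      _ ≤ ‖1 - c‖ + ‖-1 - c‖ := norm_sub_le _ _
  rcases le_total 1 ‖1 - c‖ with h | h
  · exact ⟨1, by simp, h⟩
  · exact ⟨-1, by simp, by linarith⟩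

theorem exists_mem_unitaryGroup_norm_sub_le_sq {c : Matrix Unit Unit 𝕜}
    {b : Matrix Unit k 𝕜} {p : Matrix k Unit 𝕜} {C : Matrix k k 𝕜}
    (hW : fromBlocks c b p C ∈ unitaryGroup (Unit ⊕ k) 𝕜) :
    ∃ Z ∈ unitaryGroup k 𝕜, ‖C - Z‖ ≤ ‖b‖ ^ 2 := by
  obtain ⟨ω, hω, hωc⟩ := exists_star_mul_self_eq_one_and_one_le_norm_sub (c () ())
  have hωc_ne : ω - c () () ≠ 0 := norm_pos_iff.1 (one_pos.trans_le hωc)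
  have hω_mem : (ω • 1 : Matrix Unit Unit 𝕜) ∈ unitaryGroup Unit 𝕜 := by
    rw [mem_unitaryGroup_iff', star_smul, star_one, smul_mul_smul_comm, hω, one_smul, one_mul]
  have feedback : c * ((ω - c () ())⁻¹ • b) + b
      = (ω • 1 : Matrix Unit Unit 𝕜) * ((ω - c () ())⁻¹ • b) := by
    ext
    simp only [Matrix.mul_smul, Matrix.add_apply, Matrix.smul_apply, Matrix.mul_apply,
      Finset.univ_unique, PUnit.default_eq_unit, Finset.sum_singleton, smul_eq_mul, one_apply_eq,
      mul_one]
    field_simp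
    ring
  refine ⟨_, add_mul_mem_unitaryGroup_of_fromBlocks hW hω_mem feedback, ?_⟩
  calc ‖C - (C + p * ((ω - c () ())⁻¹ • b))‖ = ‖(ω - c () ())⁻¹ • (p * b)‖ := by
        rw [Matrix.mul_smul, sub_add_cancel_left, norm_neg]
    _ ≤ 1 * (‖p‖ * ‖b‖) := by
        rw [norm_smul, norm_inv]
        gcongr
        exacts [inv_le_one_of_one_le₀ hωc, l2_opNorm_mul _ _]
    _ = ‖b‖ ^ 2 := by
        rw [norm_col_eq_norm_row_of_fromBlocks_mem_unitaryGroup hW, one_mul, sq]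

theorem exists_mem_unitaryGroup_norm_compression_sub_le {c : Matrix Unit Unit 𝕜}
    {b : Matrix Unit k 𝕜} {p : Matrix k Unit 𝕜} {C : Matrix k k 𝕜} {d : Matrix Unit Unit 𝕜}
    {e : Matrix Unit l 𝕜} {q : Matrix l Unit 𝕜} {D : Matrix l l 𝕜}
    (hW : fromBlocks c b p C ∈ unitaryGroup (Unit ⊕ k) 𝕜)
    (hV : fromBlocks d e q D ∈ unitaryGroup (Unit ⊕ l) 𝕜)
    (s : Matrix Unit Unit 𝕜) (S : Matrix k l 𝕜) :
    ∃ X ∈ unitaryGroup k 𝕜, ∃ Y ∈ unitaryGroup l 𝕜,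
      ‖bᴴ * s * e + Cᴴ * S * D - Xᴴ * S * Y‖ ≤ ‖fromBlocks s 0 0 S‖ * (‖b‖ + ‖e‖) ^ 2 := by
  obtain ⟨X, hX, hCX⟩ := exists_mem_unitaryGroup_norm_sub_le_sq hW
  obtain ⟨Y, hY, hDY⟩ := exists_mem_unitaryGroup_norm_sub_le_sq hV
  refine ⟨X, hX, Y, hY, ?_⟩
  set T := fromBlocks s 0 0 S
  have hs : ‖s‖ ≤ ‖T‖ := l2_opNorm_submatrix_le Sum.inl_injective Sum.inl_injective T
  have hS : ‖S‖ ≤ ‖T‖ := l2_opNorm_submatrix_le Sum.inr_injective Sum.inr_injective T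
  have hD : ‖D‖ ≤ 1 :=
    (l2_opNorm_submatrix_le Sum.inr_injective Sum.inr_injective (fromBlocks d e q D)).trans
      (l2_opNorm_le_one_of_conjTranspose_mul_self_eq_one (mem_unitaryGroup_iff'.1 hV))
  have hX_norm : ‖X‖ ≤ 1 :=
    l2_opNorm_le_one_of_conjTranspose_mul_self_eq_one (mem_unitaryGroup_iff'.1 hX)
  have corner : ‖bᴴ * s * e‖ ≤ ‖b‖ * ‖T‖ * ‖e‖ := by
    grw [l2_opNorm_mul_mul_le, l2_opNorm_conjTranspose, hs]
  have left : ‖(C - X)ᴴ * S * D‖ ≤ ‖b‖ ^ 2 * ‖T‖ * 1 := by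
    grw [l2_opNorm_mul_mul_le, l2_opNorm_conjTranspose, hCX, hS, hD]
  have right : ‖Xᴴ * S * (D - Y)‖ ≤ 1 * ‖T‖ * ‖e‖ ^ 2 := by
    grw [l2_opNorm_mul_mul_le, l2_opNorm_conjTranspose, hDY, hS, hX_norm]
  calc ‖bᴴ * s * e + Cᴴ * S * D - Xᴴ * S * Y‖
      = ‖bᴴ * s * e + (C - X)ᴴ * S * D + Xᴴ * S * (D - Y)‖ := by
        congr 1
        simp only [conjTranspose_sub, Matrix.sub_mul, Matrix.mul_sub]
        abel
    _ ≤ ‖b‖ * ‖T‖ * ‖e‖ + ‖b‖ ^ 2 * ‖T‖ * 1 + 1 * ‖T‖ * ‖e‖ ^ 2 := by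
        grw [norm_add₃_le, corner, left, right]
    _ ≤ ‖T‖ * (‖b‖ + ‖e‖) ^ 2 := by
        have : 0 ≤ ‖T‖ * (‖b‖ * ‖e‖) := by positivity
        linarith

theorem fromBlocks_diagonal_mem_unitaryGroup {X : Matrix k k α} {Y : Matrix l l α}
    (hX : X ∈ unitaryGroup k α) (hY : Y ∈ unitaryGroup l α) :
    fromBlocks X 0 0 Y ∈ unitaryGroup (k ⊕ l) α := by
  rw [mem_unitaryGroup_iff', star_eq_conjTranspose] at *
  simp [fromBlocks_conjTranspose, fromBlocks_multiply, hX, hY]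

theorem l2_opNorm_fromBlocks_sub_conj_le {X : Matrix k k 𝕜} {Y : Matrix l l 𝕜}
    (hX : X ∈ unitaryGroup k 𝕜) (hY : Y ∈ unitaryGroup l 𝕜) (a d : 𝕜) (E S : Matrix k l 𝕜) :
    ‖fromBlocks (a • 1) E Eᴴ (d • 1)
        - (fromBlocks X 0 0 Y)ᴴ * fromBlocks (a • 1) S Sᴴ (d • 1) * fromBlocks X 0 0 Y‖
      ≤ ‖E - Xᴴ * S * Y‖ := by
  have hX' : Xᴴ * X = 1 := mem_unitaryGroup_iff'.1 hX
  have hY' : Yᴴ * Y = 1 := mem_unitaryGroup_iff'.1 hY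
  calc _ = ‖fromBlocks 0 (E - Xᴴ * S * Y) (E - Xᴴ * S * Y)ᴴ 0‖ := by
        congr 1
        simp [fromBlocks_conjTranspose, fromBlocks_multiply, sub_eq_add_neg, fromBlocks_neg,
          fromBlocks_add, hX', hY', Matrix.mul_assoc]
    _ ≤ ‖E - Xᴴ * S * Y‖ := by
        simpa only [l2_opNorm_conjTranspose, max_self] using
          l2_opNorm_fromBlocks_antidiagonal_le (E - Xᴴ * S * Y) (E - Xᴴ * S * Y)ᴴ

end PrincipalBlock

section UnitaryCompletion

variable {𝕜 m n k l : Type*} [RCLike 𝕜] [Fintype m] [Fintype n] [Fintype k] [Fintype l]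
  [DecidableEq m] [DecidableEq n] [DecidableEq k] [DecidableEq l]

/-- The bordered matrix `[u, P]` whose first column is `u`. -/
abbrev bordered (u : m → 𝕜) (P : Matrix m k 𝕜) : Matrix m (Unit ⊕ k) 𝕜 :=
  fromCols (replicateCol Unit u) P

/-- The columns of `P` complete `u` to an orthonormal basis, i.e. `[u, P]` is unitary. Both products
are required because the rows and the columns have different index types. -/
structure IsUnitaryCompletion (u : m → 𝕜) (P : Matrix m k 𝕜) : Prop where
  conjTranspose_mul_self : (bordered u P)ᴴ * bordered u P = 1
  mul_conjTranspose_self : bordered u P * (bordered u P)ᴴ = 1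

theorem isUnitaryCompletion_of_orthonormal {u : m → 𝕜} {P : Matrix m k 𝕜} (hu : star u ⬝ᵥ u = 1)
    (hP : Pᴴ * P = 1) (hPu : Pᴴ *ᵥ u = 0) (complete : vecMulVec u (star u) + P * Pᴴ = 1) :
    IsUnitaryCompletion u P where
  conjTranspose_mul_self := by
    have hPu' : Pᴴ * replicateCol Unit u = 0 := by
      rw [← replicateCol_mulVec, hPu, replicateCol_zero]
    have huP : (replicateCol Unit u)ᴴ * P = 0 := by
      rw [← conjTranspose_conjTranspose P, ← conjTranspose_mul, hPu', conjTranspose_zero]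
    have huu : (replicateCol Unit u)ᴴ * replicateCol Unit u = 1 := by
      ext
      simpa [Matrix.mul_apply, dotProduct] using hu
    rw [conjTranspose_fromCols_eq_fromRows_conjTranspose, fromRows_mul_fromCols, huu, huP, hPu', hP,
      fromBlocks_one]
  mul_conjTranspose_self := by
    rw [conjTranspose_fromCols_eq_fromRows_conjTranspose, fromCols_mul_fromRows,
      conjTranspose_replicateCol, ← vecMulVec_eq, complete]

theorem isUnitaryCompletion_col_zero {r : ℕ} {U : Matrix m (Fin (r + 1)) 𝕜} (hU : Uᴴ * U = 1)
    (hU' : U * Uᴴ = 1) : IsUnitaryCompletion (fun i => U i 0) (U.submatrix id Fin.succ) := by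
  let e : Unit ⊕ Fin r ≃ Fin (r + 1) :=
    (Equiv.sumComm _ _).trans ((Equiv.optionEquivSumPUnit _).symm.trans (finSuccEquiv r).symm)
  have h : bordered (fun i => U i 0) (U.submatrix id Fin.succ) = U.submatrix id e := by
    ext i (j | j) <;> simp [e]
  constructor
  · rw [h, conjTranspose_submatrix, ← submatrix_mul _ _ _ _ _ Function.bijective_id, hU,
      submatrix_one_equiv]
  · rw [h, conjTranspose_submatrix, ← submatrix_mul _ _ _ _ _ e.bijective, hU', submatrix_id_id]

namespace IsUnitaryCompletion

variable {u u' : m → 𝕜} {P P' : Matrix m k 𝕜} {v : n → 𝕜} {Q : Matrix n l 𝕜}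

theorem fromBlocks_mem_unitaryGroup (hP : IsUnitaryCompletion u P)
    (hP' : IsUnitaryCompletion u' P') :
    fromBlocks ((replicateCol Unit u)ᴴ * replicateCol Unit u') ((replicateCol Unit u)ᴴ * P')
      (Pᴴ * replicateCol Unit u') (Pᴴ * P') ∈ unitaryGroup (Unit ⊕ k) 𝕜 := by
  rw [← fromRows_mul_fromCols, ← conjTranspose_fromCols_eq_fromRows_conjTranspose,
    mem_unitaryGroup_iff', star_eq_conjTranspose, conjTranspose_mul, conjTranspose_conjTranspose]
  calc _ = (bordered u' P')ᴴ * (bordered u P * (bordered u P)ᴴ) * bordered u' P' := by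
        simp only [Matrix.mul_assoc]
    _ = 1 := by rw [hP.mul_conjTranspose_self, Matrix.mul_one, hP'.conjTranspose_mul_self]

theorem norm_fromBlocks_le (hP : IsUnitaryCompletion u P) (hQ : IsUnitaryCompletion v Q) (s : 𝕜)
    (S : Matrix k l 𝕜) :
    ‖fromBlocks (s • (1 : Matrix Unit Unit 𝕜)) 0 0 S‖
      ≤ ‖s • vecMulVec u (star v) + P * S * Qᴴ‖ := by
  have factor : s • vecMulVec u (star v) + P * S * Qᴴ
      = bordered u P * fromBlocks (s • (1 : Matrix Unit Unit 𝕜)) 0 0 S * (bordered v Q)ᴴ := by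
    simp [fromCols_mul_fromBlocks, conjTranspose_fromCols_eq_fromRows_conjTranspose,
      fromCols_mul_fromRows, vecMulVec_eq Unit]
  calc _ = ‖(bordered u P)ᴴ * (s • vecMulVec u (star v) + P * S * Qᴴ) * bordered v Q‖ := by
        rw [factor, ← Matrix.mul_assoc, ← Matrix.mul_assoc, hP.conjTranspose_mul_self,
          Matrix.one_mul, Matrix.mul_assoc, hQ.conjTranspose_mul_self, Matrix.mul_one]
    _ ≤ _ :=
        l2_opNorm_conjTranspose_mul_mul_le hP.conjTranspose_mul_self hQ.conjTranspose_mul_self _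

end IsUnitaryCompletion

theorem similarity_bound_one_general (a d s : 𝕜) {u u' : m → 𝕜} {P P' : Matrix m k 𝕜}
    {v v' : n → 𝕜} {Q Q' : Matrix n l 𝕜} {A : Matrix m n 𝕜} {S : Matrix k l 𝕜}
    (hP : IsUnitaryCompletion u P) (hP' : IsUnitaryCompletion u' P')
    (hQ : IsUnitaryCompletion v Q) (hQ' : IsUnitaryCompletion v' Q')
    (hA : A = s • vecMulVec u (star v) + P * S * Qᴴ) :
    ∃ Z ∈ unitaryGroup (k ⊕ l) 𝕜,
      ‖fromBlocks (a • 1) (P'ᴴ * A * Q') (Q'ᴴ * Aᴴ * P') (d • 1)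
          - Zᴴ * fromBlocks (a • 1) S Sᴴ (d • 1) * Z‖
        ≤ ‖A‖ * (‖toLp 2 (P'ᴴ *ᵥ u)‖ + ‖toLp 2 (Q'ᴴ *ᵥ v)‖) ^ 2 := by
  obtain ⟨X, hX, Y, hY, hXY⟩ := exists_mem_unitaryGroup_norm_compression_sub_le
    (hP.fromBlocks_mem_unitaryGroup hP') (hQ.fromBlocks_mem_unitaryGroup hQ') (s • 1) S
  have compress : P'ᴴ * A * Q' = ((replicateCol Unit u)ᴴ * P')ᴴ * (s • (1 : Matrix Unit Unit 𝕜))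
      * ((replicateCol Unit v)ᴴ * Q') + (Pᴴ * P')ᴴ * S * (Qᴴ * Q') := by
    simp [hA, vecMulVec_eq Unit, Matrix.mul_add, Matrix.add_mul, Matrix.mul_assoc]
  refine ⟨fromBlocks X 0 0 Y, fromBlocks_diagonal_mem_unitaryGroup hX hY, ?_⟩
  have adjoint : Q'ᴴ * Aᴴ * P' = (P'ᴴ * A * Q')ᴴ := by simp [Matrix.mul_assoc]
  rw [adjoint]
  grw [l2_opNorm_fromBlocks_sub_conj_le hX hY, compress, hXY, hP.norm_fromBlocks_le hQ, ← hA,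
    l2_opNorm_conjTranspose_replicateCol_mul, l2_opNorm_conjTranspose_replicateCol_mul]

end UnitaryCompletion

theorem mul_mul_conjTranspose_eq_smul_vecMulVec_add {α m n : Type*} [CommSemiring α] [StarRing α]
    {p q : ℕ} (U : Matrix m (Fin (p + 1)) α) (V : Matrix n (Fin (q + 1)) α)
    {S : Matrix (Fin (p + 1)) (Fin (q + 1)) α} (hrow : ∀ j : Fin q, S 0 j.succ = 0)
    (hcol : ∀ i : Fin p, S i.succ 0 = 0) :
    U * S * Vᴴ = S 0 0 • vecMulVec (fun i => U i 0) (star fun i => V i 0)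
      + U.submatrix id Fin.succ * S.submatrix Fin.succ Fin.succ * (V.submatrix id Fin.succ)ᴴ := by
  ext
  simp only [Matrix.mul_apply, Fin.sum_univ_succ, conjTranspose_apply, hcol, mul_zero,
    Finset.sum_const_zero, add_zero, hrow, zero_add, conjTranspose_submatrix,
    Matrix.add_apply, Matrix.smul_apply, vecMulVec_apply, Pi.star_apply, smul_eq_mul,
    submatrix_apply, id_eq]
  ring

theorem specNorm_eq_l2_opNorm {ι κ : Type*} [Fintype ι] [Fintype κ] [DecidableEq κ]
    (A : Matrix ι κ ℝ) : specNorm A = ‖A‖ := rfl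

theorem vnorm_eq_norm_toLp {ι : Type*} [Fintype ι] (x : ι → ℝ) : vnorm x = ‖toLp 2 x‖ := by
  simp [vnorm, EuclideanSpace.norm_eq]

/-- Theorem 3.4. The reduced coefficient matrix `B̃₁'` of the JDSVD
correction equation is orthogonally similar to its exact counterpart `B₁'` up to an error
bounded by `‖A‖ (sin φ + sin ψ)²`. -/
theorem similarity_bound_one {M N : ℕ} (hN : 2 ≤ N) (hMN : N ≤ M)
    (A : Matrix (Fin M) (Fin N) ℝ)
    (U : Matrix (Fin M) (Fin M) ℝ) (V : Matrix (Fin N) (Fin N) ℝ)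
    (hU : Uᵀ * U = 1) (hV : Vᵀ * V = 1)
    (σ : Fin N → ℝ) (hσ : ∀ i, 0 ≤ σ i)
    (S : Matrix (Fin M) (Fin N) ℝ)
    (hS : ∀ i j, S i j = if (i : ℕ) = (j : ℕ) then σ j else 0)
    (hA : A = U * S * Vᵀ)
    (τ : ℝ) (hτ0 : 0 ≤ τ)
    (u1 : Fin M → ℝ) (hu1 : u1 = fun i => U i ⟨0, by omega⟩)
    (v1 : Fin N → ℝ) (hv1 : v1 = fun i => V i ⟨0, by omega⟩)
    (u1t : Fin M → ℝ) (hu1t : ∑ i, u1t i ^ 2 = 1)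
    (v1t : Fin N → ℝ) (hv1t : ∑ i, v1t i ^ 2 = 1)
    (Pt : Matrix (Fin M) (Fin (M - 1)) ℝ)
    (hPt1 : Ptᵀ * Pt = 1) (hPt2 : Ptᵀ *ᵥ u1t = 0)
    (hPt3 : vecMulVec u1t u1t + Pt * Ptᵀ = 1)
    (Qt : Matrix (Fin N) (Fin (N - 1)) ℝ)
    (hQt1 : Qtᵀ * Qt = 1) (hQt2 : Qtᵀ *ᵥ v1t = 0)
    (hQt3 : vecMulVec v1t v1t + Qt * Qtᵀ = 1)
    (S1 : Matrix (Fin (M - 1)) (Fin (N - 1)) ℝ)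
    (hS1 : ∀ i j, S1 i j =
      if (i : ℕ) = (j : ℕ) then σ ⟨(j : ℕ) + 1, by have := j.isLt; omega⟩ else 0)
    (B1t' B1' : Matrix (Fin (M - 1) ⊕ Fin (N - 1)) (Fin (M - 1) ⊕ Fin (N - 1)) ℝ)
    (hB1t' : B1t' = Matrix.fromBlocks ((-τ) • 1) (Ptᵀ * A * Qt) (Qtᵀ * Aᵀ * Pt) ((-τ) • 1))
    (hB1' : B1' = Matrix.fromBlocks ((-τ) • 1) S1 S1ᵀ ((-τ) • 1)) :
    ∃ Z : Matrix (Fin (M - 1) ⊕ Fin (N - 1)) (Fin (M - 1) ⊕ Fin (N - 1)) ℝ,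
      Zᵀ * Z = 1 ∧
      specNorm (B1t' - Zᵀ * B1' * Z) ≤
        specNorm A * (vnorm (Ptᵀ *ᵥ u1) + vnorm (Qtᵀ *ᵥ v1)) ^ 2 := by
  obtain ⟨n, rfl⟩ : ∃ n, N = n + 1 := ⟨N - 1, by omega⟩
  obtain ⟨m, rfl⟩ : ∃ m, M = m + 1 := ⟨M - 1, by omega⟩
  subst hu1 hv1 hB1t' hB1'
  have deflation := mul_mul_conjTranspose_eq_smul_vecMulVec_add U V (S := S)
    (fun j => by simp [hS]) (fun i => by simp [hS])
  obtain ⟨Z, hZ, hZ_bound⟩ := similarity_bound_one_general (-τ) (-τ) (S 0 0)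
    (isUnitaryCompletion_col_zero hU (mul_eq_one_comm.1 hU))
    (isUnitaryCompletion_of_orthonormal (by simpa [dotProduct, sq] using hu1t) hPt1 hPt2 hPt3)
    (isUnitaryCompletion_col_zero hV (mul_eq_one_comm.1 hV))
    (isUnitaryCompletion_of_orthonormal (by simpa [dotProduct, sq] using hv1t) hQt1 hQt2 hQt3)
    (hA.trans deflation)
  have hS1 : S.submatrix Fin.succ Fin.succ = S1 := by
    ext i j
    simp only [submatrix_apply, hS, Fin.val_succ, Nat.add_right_cancel_iff, hS1]
    rfl
  rw [hS1] at hZ_bound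
  simp only [specNorm_eq_l2_opNorm, vnorm_eq_norm_toLp]
  exact ⟨Z, mem_unitaryGroup_iff'.1 hZ, hZ_bound⟩
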